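/- There exists a dendroid D (a smooth dendroid, obtained by joining the vertices of two copies of the Lelek fan by an arc) such that the set E(D) of endpoints of D is not dense in D, yet E(D) has no point of zero-dimensionality (E(D) is 1-dimensional at every point). In particular, the analog for dendroids of the statement 'if the endpoint set is not dense then it has a point of zero-dimensionality' fails. -/

import Mathlib

/-!
The dendroid is a comb in the plane: the spine `[-2, 2] × {0}` with a vertical tooth of length
`tooth s` over each point `s`, where `tooth` vanishes outside two mirror images of the Cantor set
`2 ^ ℕ`. At the point coded by a binary sequence `x` the tooth has length `1 / (1 + weight x)`,
where `weight x = ∑ {1 / (n + 1) : x n = 1}`. The weight is lower semicontinuous, so the comb is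
compact. Each half, with its part of the spine collapsed, would be a fan of Lelek type; keeping
the spine makes the quotient unnecessary and puts the two halves in the plane.

*Dendroid.* Toothless points of the spine are dense, and the vertical line through such a point
meets the comb only in the spine. Hence a closed connected subset of the comb contains, with any
two points, the arc of the comb joining them (`arcConvex_of_isPreconnected`). Arc-convexity is
stable under intersections and implies connectedness, so the comb is hereditarily unicoherent.

*Endpoints.* They are exactly the tips of the nondegenerate teeth (`mem_endpoints_comb`): two arcs
starting at a tip both descend along its tooth, so they share more than the tip. The ends `±2` of
the spine carry teeth, so they are not endpoints. The middle of the spine, `|s| < 1 / 2`, carries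
no teeth, so the endpoints are not dense.

*No point of zero-dimensionality.* The space of tips over one half is the set of sequences of
finite weight, with convergence of points together with weights. Erdős's argument
(`no_bounded_clopen`) shows that a nonempty clopen set of such sequences has unbounded weights, so
a nonempty clopen set of tips comes arbitrarily close to the spine. A small neighbourhood of a tip
therefore contains no clopen neighbourhood.
-/

open Set Topology

noncomputable section

namespace SmoothFanPaper

/-- `A` is an arc (a homeomorphic copy of `[0,1]`) with endpoints `a` and `b`. -/
def IsArc {α : Type*} [TopologicalSpace α] (A : Set α) (a b : α) : Prop :=
  ∃ h : (Set.Icc (0:ℝ) 1) ≃ₜ A,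
    (h ⟨0, Set.left_mem_Icc.mpr zero_le_one⟩ : α) = a ∧
    (h ⟨1, Set.right_mem_Icc.mpr zero_le_one⟩ : α) = b

/-- The order of `x` in `X` is at least `n`: there are `n` arcs contained in `X`, each with
`x` as an endpoint, which pairwise meet only in `x`. -/
def OrderAtLeast {α : Type*} [TopologicalSpace α] (X : Set α) (x : α) (n : ℕ) : Prop :=
  ∃ A : Fin n → Set α, (∀ i, A i ⊆ X) ∧ (∀ i, ∃ b, IsArc (A i) x b) ∧
    ∀ i j, i ≠ j → A i ∩ A j = {x}

/-- The set of endpoints of `X`: points of order exactly `1`. -/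
def Endpoints {α : Type*} [TopologicalSpace α] (X : Set α) : Set α :=
  {x | x ∈ X ∧ OrderAtLeast X x 1 ∧ ¬ OrderAtLeast X x 2}

/-- The Cantor fan: the union of all straight-line segments from the origin to the points of
`cantorSet × {1}` in the plane. -/
def CantorFan : Set (ℝ × ℝ) :=
  {q | ∃ c ∈ cantorSet, ∃ t ∈ Set.Icc (0:ℝ) 1, q = (t * c, t)}

/-- The cone point of the Cantor fan. -/
def fanVertex : ℝ × ℝ := (0, 0)

/-- A smooth fan: a non-degenerate subcontinuum of the Cantor fan containing the cone point,
whose cone point (the vertex) has order at least 2.  (Every statement below about smooth fans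
is invariant under homeomorphisms, so we may realize all smooth fans concretely as such
subcontinua.) -/
structure IsSmoothFan (X : Set (ℝ × ℝ)) : Prop where
  subset_fan : X ⊆ CantorFan
  isCompact : IsCompact X
  isConnected : IsConnected X
  nondegenerate : ∃ x ∈ X, ∃ y ∈ X, x ≠ y
  vertex_mem : fanVertex ∈ X
  vertex_order : OrderAtLeast X fanVertex 2

/-- Two subsets of `(0,1)` are order isomorphic if some order preserving self-homeomorphism
of `[0,1]` maps one onto the other. -/
def OrderIsomorphic (A B : Set ℝ) : Prop :=
  ∃ h : (Set.Icc (0:ℝ) 1) ≃ₜ (Set.Icc (0:ℝ) 1), StrictMono h ∧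
    Subtype.val '' (⇑h '' (Subtype.val ⁻¹' A)) = B

/-- The canonical parametrization of (subsets of) the leg of the Cantor fan through `e`:
a point of the leg is sent to its height, rescaled so that `e` is at height `1`. -/
def legParam (e : ℝ × ℝ) (S : Set (ℝ × ℝ)) : Set ℝ :=
  (fun q : ℝ × ℝ => q.2 / e.2) '' S

/-- The trace of the closure of a set `T` on the open leg `pe ∖ {p, e}` (where `p` is the
vertex and `pe = segment ℝ p e` is the unique arc in a smooth fan from `p` to an endpoint
`e`), viewed as a subset of `(0,1)` via the canonical parametrization of the leg. -/
def legTrace (T : Set (ℝ × ℝ)) (e : ℝ × ℝ) : Set ℝ :=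
  legParam e ((closure T ∩ segment ℝ fanVertex e) \ {fanVertex, e})

/-- `K` enumerates a countably infinite set `𝒦` of compact subsets of `(0,1)`, no two of
which are order isomorphic. -/
def KFamily (K : ℕ → Set ℝ) : Prop :=
  (∀ n, IsCompact (K n) ∧ K n ⊆ Set.Ioo (0:ℝ) 1) ∧
    ∀ m n, m ≠ n → ¬ OrderIsomorphic (K m) (K n)

/-- `X` is a `𝒦`-fan with witnessing endpoint set `E_𝒦 = {e n : n ∈ ℕ}`. -/
structure IsKFan (K : ℕ → Set ℝ) (X : Set (ℝ × ℝ)) (e : ℕ → ℝ × ℝ) : Prop where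
  fan : IsSmoothFan X
  mem_endpoints : ∀ n, e n ∈ Endpoints X
  trace_iso : ∀ n, OrderIsomorphic (legTrace (Endpoints X) (e n)) (K n)
  trace_not_iso : ∀ x ∈ Endpoints X \ Set.range e, ∀ n,
    ¬ OrderIsomorphic (legTrace (Endpoints X) x) (K n)
  meets_closure : ∀ x ∈ Endpoints X \ Set.range e,
    ((closure (Set.range e) ∩ segment ℝ fanVertex x) \ {fanVertex}).Nonempty

/-- A smooth fan is endpoint rigid if every self-homeomorphism fixes every endpoint. -/
def EndpointRigid (X : Set (ℝ × ℝ)) : Prop :=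
  ∀ h : X ≃ₜ X, ∀ x : X, (x : ℝ × ℝ) ∈ Endpoints X → ((h x : X) : ℝ × ℝ) = (x : ℝ × ℝ)

/-- Complete Erdős space `𝔈_c`: the points of the Hilbert space `ℓ²` all of whose
coordinates lie in `{0} ∪ {1/m : m ≥ 1}`. -/
def ErdosSpace : Set (lp (fun _ : ℕ => ℝ) 2) :=
  {x | ∀ n : ℕ, x n = 0 ∨ ∃ m : ℕ, 0 < m ∧ x n = 1 / m}

/-- `z` is a point of zero-dimensionality of the space it lives in: it has a neighborhood
basis of clopen subsets. -/
def ZeroDimPointAt {α : Type*} [TopologicalSpace α] (z : α) : Prop :=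
  ∀ U ∈ nhds z, ∃ V : Set α, IsClopen V ∧ z ∈ V ∧ V ⊆ U
/-- `L₀^φ = {(x,y) : x ∈ C, 0 ≤ y ≤ φ(x)}`, over the Cantor set. -/
def L0 (φ : ℝ → ℝ) : Set (ℝ × ℝ) :=
  {q | q.1 ∈ cantorSet ∧ 0 ≤ q.2 ∧ q.2 ≤ φ q.1}

/-- `G₀^φ = {(x,φ(x)) : x ∈ C, φ(x) > 0}`, over the Cantor set. -/
def G0 (φ : ℝ → ℝ) : Set (ℝ × ℝ) :=
  {q | q.1 ∈ cantorSet ∧ 0 < q.2 ∧ q.2 = φ q.1}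

/-- The setoid on `L₀^φ` identifying the set `C × {0}` to a point. -/
def L0Setoid (φ : ℝ → ℝ) : Setoid (L0 φ) where
  r a b := a = b ∨ ((a : ℝ × ℝ).2 = 0 ∧ (b : ℝ × ℝ).2 = 0)
  iseqv := by
    constructor
    · exact fun _ => Or.inl rfl
    · rintro a b (rfl | ⟨h1, h2⟩)
      · exact Or.inl rfl
      · exact Or.inr ⟨h2, h1⟩
    · rintro a b c (rfl | ⟨h1, h2⟩) (rfl | ⟨h3, h4⟩)
      · exact Or.inl rfl
      · exact Or.inr ⟨h3, h4⟩
      · exact Or.inr ⟨h1, h2⟩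
      · exact Or.inr ⟨h1, h4⟩

/-- The quotient space `L₀^φ / (C × {0})`. -/
def L0Quot (φ : ℝ → ℝ) : Type := Quotient (L0Setoid φ)

instance (φ : ℝ → ℝ) : TopologicalSpace (L0Quot φ) :=
  inferInstanceAs (TopologicalSpace (Quotient (L0Setoid φ)))

/-- The quotient projection `L₀^φ → L₀^φ / (C × {0})`. -/
def L0Proj (φ : ℝ → ℝ) : L0 φ → L0Quot φ := Quotient.mk (L0Setoid φ)

/-- The setoid on `E × [0,1]` identifying `E × {0}` to a point. -/
def coneSetoid (E : Type*) : Setoid (E × Set.Icc (0:ℝ) 1) where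
  r a b := a = b ∨ ((a.2 : ℝ) = 0 ∧ (b.2 : ℝ) = 0)
  iseqv := by
    constructor
    · exact fun _ => Or.inl rfl
    · rintro a b (rfl | ⟨h1, h2⟩)
      · exact Or.inl rfl
      · exact Or.inr ⟨h2, h1⟩
    · rintro a b c (rfl | ⟨h1, h2⟩) (rfl | ⟨h3, h4⟩)
      · exact Or.inl rfl
      · exact Or.inr ⟨h3, h4⟩
      · exact Or.inr ⟨h1, h2⟩
      · exact Or.inr ⟨h1, h4⟩

/-- The cone over a space `E`: the quotient `(E × [0,1]) / (E × {0})`. -/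
def Cone (E : Type*) [TopologicalSpace E] : Type _ := Quotient (coneSetoid E)

instance (E : Type*) [TopologicalSpace E] : TopologicalSpace (Cone E) :=
  inferInstanceAs (TopologicalSpace (Quotient (coneSetoid E)))

/-- A point of the one-point compactification of the disjoint union of the fans `X i`
is to be glued iff it is `∞` or the vertex of one of the fans. -/
def isGluedPoint {ι : Type*} (X : ι → Set (ℝ × ℝ)) :
    OnePoint (Σ i : ι, X i) → Prop :=
  fun a => a.elim True (fun q => (q.2 : ℝ × ℝ) = fanVertex)

/-- The setoid gluing the vertices (and the point at infinity) of the fans `X i`. -/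
def fanSumSetoid {ι : Type*} (X : ι → Set (ℝ × ℝ)) :
    Setoid (OnePoint (Σ i : ι, X i)) where
  r a b := a = b ∨ (isGluedPoint X a ∧ isGluedPoint X b)
  iseqv := by
    constructor
    · exact fun _ => Or.inl rfl
    · rintro a b (rfl | ⟨h1, h2⟩)
      · exact Or.inl rfl
      · exact Or.inr ⟨h2, h1⟩
    · rintro a b c (rfl | ⟨h1, h2⟩) (rfl | ⟨h3, h4⟩)
      · exact Or.inl rfl
      · exact Or.inr ⟨h3, h4⟩
      · exact Or.inr ⟨h1, h2⟩
      · exact Or.inr ⟨h1, h4⟩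

/-- The sum `Σᵢ Xᵢ` of a (finite or countably infinite) family of smooth fans: the quotient of
the one-point compactification of their disjoint union identifying the set consisting of all
the vertices and the point at infinity to a single point.  (For a finite family, `∞` is an
isolated point which is absorbed by the vertex class, so this agrees with the quotient of the
plain disjoint union identifying the vertices.) -/
def FanSum {ι : Type*} (X : ι → Set (ℝ × ℝ)) : Type _ := Quotient (fanSumSetoid X)

instance {ι : Type*} (X : ι → Set (ℝ × ℝ)) : TopologicalSpace (FanSum X) :=
  inferInstanceAs (TopologicalSpace (Quotient (fanSumSetoid X)))

open Filter

/-! ### The height function on the Cantor set -/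

/-- The weight `∑ {1/(n+1) : x n = 1}`, possibly infinite, of a binary sequence `x`. -/
def weight (x : ℕ → Bool) : ENNReal :=
  ∑' n, if x n then ENNReal.ofReal (1 / ((n : ℝ) + 1)) else 0

/-- The decreasing rescaling `u ↦ 1 / (1 + u)` of `[0, ∞]` onto `[0, 1]`, which is `0` at `∞`. -/
def rescale (u : ENNReal) : ℝ := ((1 + u)⁻¹).toReal

lemma rescale_nonneg (u : ENNReal) : 0 ≤ rescale u := ENNReal.toReal_nonneg

lemma one_add_inv_ne_top (u : ENNReal) : (1 + u)⁻¹ ≠ ⊤ := by simp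

lemma rescale_antitone : Antitone rescale := fun u v h =>
  ENNReal.toReal_mono (one_add_inv_ne_top u) (by gcongr)

lemma rescale_le_one (u : ENNReal) : rescale u ≤ 1 := by
  have := rescale_antitone (show (0 : ENNReal) ≤ u from bot_le)
  simpa [rescale] using this

lemma continuous_rescale : Continuous rescale := by
  refine continuous_iff_continuousAt.2 fun u => ?_
  refine (ENNReal.tendsto_toReal (one_add_inv_ne_top u)).comp ?_
  exact (show Continuous fun u : ENNReal => (1 + u)⁻¹ by fun_prop).continuousAt

lemma rescale_pos {u : ENNReal} (h : 0 < rescale u) : u ≠ ⊤ := by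
  rintro rfl
  simp [rescale] at h

lemma rescale_lt {u : ENNReal} (hu : u ≠ ⊤) : rescale (u + 1) < rescale u := by
  refine (ENNReal.toReal_lt_toReal (one_add_inv_ne_top _) (one_add_inv_ne_top _)).2 ?_
  rw [ENNReal.inv_lt_inv, ← add_assoc]
  exact ENNReal.lt_add_right (by simp [hu]) one_ne_zero

lemma pos_rescale {u : ENNReal} (hu : u ≠ ⊤) : 0 < rescale u :=
  (rescale_nonneg _).trans_lt (rescale_lt hu)

lemma lowerSemicontinuous_weight : LowerSemicontinuous weight := by
  refine lowerSemicontinuous_tsum fun n => Continuous.lowerSemicontinuous ?_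
  exact (continuous_of_discreteTopology
    (f := fun b : Bool => if b then ENNReal.ofReal (1 / ((n : ℝ) + 1)) else 0)).comp
    (continuous_apply n)

lemma isClosed_hypograph_rescale_weight :
    IsClosed {q : (ℕ → Bool) × ℝ | q.2 ≤ rescale (weight q.1)} := by
  have h : UpperSemicontinuous fun x => rescale (weight x) :=
    continuous_rescale.comp_lowerSemicontinuous_antitone lowerSemicontinuous_weight
      rescale_antitone
  simpa using (upperSemicontinuousOn_iff_isClosed_hypograph isClosed_univ).1
    (h.upperSemicontinuousOn univ)

lemma not_summable_weights (k : ℕ) :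
    ∑' n, ENNReal.ofReal (1 / (((n + k : ℕ) : ℝ) + 1)) = ⊤ := by
  by_contra h
  have h1 := ENNReal.summable_toReal h
  have h2 : Summable fun n : ℕ => (fun m : ℕ => 1 / (m : ℝ)) (n + (k + 1)) := by
    refine h1.congr fun n => ?_
    rw [ENNReal.toReal_ofReal (by positivity)]
    push_cast
    ring
  exact Real.not_summable_one_div_natCast ((summable_nat_add_iff (k + 1)).1 h2)

/-- The sequence obtained from `x` by trying to switch on the coordinates `0, 1, 2, …` one after
the other, keeping a change exactly when it stays in `A`. -/
def greedy (A : Set (ℕ → Bool)) (x : ℕ → Bool) : ℕ → ℕ → Bool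
  | 0 => x
  | k + 1 => open Classical in
    if Function.update (greedy A x k) k true ∈ A then Function.update (greedy A x k) k true
    else greedy A x k

/-- Erdős's argument. Suppose weights are bounded on `A`. Greedily switching on coordinates of a
point of `A` gives a limit `y`. If `A` is closed for convergence of points together with weights,
then `y ∈ A`; if it is open, then almost all of the attempted changes succeeded, and `y` has
infinite weight because the harmonic series diverges. -/
lemma no_bounded_clopen (A : Set (ℕ → Bool)) (M : ENNReal) (hM : M ≠ ⊤)
    (hbd : ∀ x ∈ A, weight x ≤ M)
    (hclosed : ∀ (u : ℕ → ℕ → Bool) (y : ℕ → Bool), weight y ≠ ⊤ → (∀ k, u k ∈ A) →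
      Tendsto u atTop (𝓝 y) → Tendsto (fun k => weight (u k)) atTop (𝓝 (weight y)) → y ∈ A)
    (h_open : ∀ (u : ℕ → ℕ → Bool) (y : ℕ → Bool), y ∈ A → (∀ k, weight (u k) ≠ ⊤) →
      Tendsto u atTop (𝓝 y) → Tendsto (fun k => weight (u k)) atTop (𝓝 (weight y)) →
      ∀ᶠ k in atTop, u k ∈ A) :
    A = ∅ := by
  by_contra hA
  obtain ⟨x, hx⟩ := Set.nonempty_iff_ne_empty.2 hA
  set X := greedy A x with hX
  have hsucc : ∀ k, X (k + 1) = X k ∨ X (k + 1) = Function.update (X k) k true := by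
    intro k
    rw [hX]
    by_cases h : Function.update (greedy A x k) k true ∈ A
    · right; simp [greedy, h]
    · left; simp [greedy, h]
  have hsucc' : ∀ k, Function.update (X k) k true ∈ A → X (k + 1) k = true := by
    intro k h
    rw [hX] at h ⊢
    simp [greedy, h]
  have hmem : ∀ k, X k ∈ A := by
    intro k
    induction k with
    | zero => exact hx
    | succ k ih =>
      by_cases h : Function.update (X k) k true ∈ A
      · have : X (k + 1) = Function.update (X k) k true := by
          rw [hX] at h ⊢; simp [greedy, h]
        rw [this]; exact h
      · have : X (k + 1) = X k := by
          rw [hX] at h ⊢; simp [greedy, h]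
        rw [this]; exact ih
  have hne : ∀ k n, n ≠ k → X (k + 1) n = X k n := by
    intro k n hn
    rcases hsucc k with h | h
    · rw [h]
    · rw [h, Function.update_of_ne hn]
  have hmono : ∀ k n, X k n = true → X (k + 1) n = true := by
    intro k n hn
    by_cases h' : n = k
    · subst h'
      rcases hsucc n with h | h
      · rw [h, hn]
      · rw [h, Function.update_self]
    · rw [hne k n h', hn]
  set y : ℕ → Bool := fun n => X (n + 1) n with hy
  -- the coordinate `n` is settled once it has been processed
  have hlt : ∀ k n, n < k → X k n = y n := by
    intro k n hn
    induction k with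
    | zero => omega
    | succ k ih =>
      rcases Nat.lt_succ_iff_lt_or_eq.1 hn with h | h
      · rw [hne k n h.ne, ih h]
      · subst h; rfl
  have hle : ∀ k n, X k n = true → y n = true := by
    intro k n hn
    by_cases h : n < k
    · rw [← hlt k n h, hn]
    · have : ∀ j, X (k + j) n = true := by
        intro j
        induction j with
        | zero => exact hn
        | succ j ih => exact hmono _ _ ih
      have h2 := this (n + 1 - k)
      rwa [show k + (n + 1 - k) = n + 1 by omega] at h2
  let w : ℕ → ENNReal := fun n => if y n then ENNReal.ofReal (1 / ((n : ℝ) + 1)) else 0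
  have hwy : weight y = ∑' n, w n := rfl
  have hlow : ∀ (k : ℕ) (z : ℕ → Bool), (∀ n < k, z n = y n) →
      ∑ n ∈ Finset.range k, w n ≤ weight z := by
    intro k z hz
    refine le_trans (le_of_eq ?_) (ENNReal.sum_le_tsum (Finset.range k))
    refine Finset.sum_congr rfl fun n hn => ?_
    simp only [w, hz n (Finset.mem_range.1 hn)]
  have hyM : weight y ≤ M :=
    ENNReal.tsum_le_of_sum_range_le fun k => (hlow k _ fun n hn => hlt k n hn).trans
      (hbd _ (hmem k))
  have hytop : weight y ≠ ⊤ := ne_top_of_le_ne_top hM hyM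
  have hwlim := ENNReal.tendsto_nat_tsum w
  rw [← hwy] at hwlim
  have hXy : ∀ k, weight (X k) ≤ weight y := by
    intro k
    refine ENNReal.tsum_le_tsum fun n => ?_
    by_cases h : X k n = true
    · simp [h, hle k n h]
    · simp [h]
  have hconv : ∀ u : ℕ → ℕ → Bool, (∀ k, ∀ n < k, u k n = y n) → Tendsto u atTop (𝓝 y) := by
    intro u hu
    refine tendsto_pi_nhds.2 fun n => ?_
    refine tendsto_const_nhds.congr' ?_
    filter_upwards [eventually_gt_atTop n] with k hk
    exact (hu k n hk).symm
  have hyA : y ∈ A := by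
    refine hclosed X y hytop hmem (hconv X hlt) ?_
    exact tendsto_of_tendsto_of_tendsto_of_le_of_le hwlim tendsto_const_nhds
      (fun k => hlow k _ (hlt k)) hXy
  set Z : ℕ → ℕ → Bool := fun k => Function.update (X k) k true with hZ
  have hZlt : ∀ k, ∀ n < k, Z k n = y n := by
    intro k n hn
    simp only [hZ]
    rw [Function.update_of_ne hn.ne, hlt k n hn]
  have hZle : ∀ k, weight (Z k) ≤ weight y + ENNReal.ofReal (1 / ((k : ℝ) + 1)) := by
    intro k
    have h1 : ENNReal.ofReal (1 / ((k : ℝ) + 1)) =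
        ∑' n, if n = k then ENNReal.ofReal (1 / ((k : ℝ) + 1)) else 0 := by
      rw [tsum_ite_eq]
    rw [h1, hwy, ← ENNReal.tsum_add]
    refine ENNReal.tsum_le_tsum fun n => ?_
    by_cases hn : n = k
    · subst hn
      simp [hZ]
    · simp only [hZ, Function.update_of_ne hn, hn, if_false, add_zero, w]
      by_cases h : X k n = true
      · simp [h, hle k n h]
      · simp [h]
  have hZlim : Tendsto (fun k => weight (Z k)) atTop (𝓝 (weight y)) := by
    refine tendsto_of_tendsto_of_tendsto_of_le_of_le hwlim ?_ (fun k => hlow k _ (hZlt k)) hZle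
    have h0 : Tendsto (fun k : ℕ => ENNReal.ofReal (1 / ((k : ℝ) + 1))) atTop (𝓝 0) := by
      have := ENNReal.tendsto_ofReal (tendsto_one_div_add_atTop_nhds_zero_nat (𝕜 := ℝ))
      simpa using this
    simpa using tendsto_const_nhds.add h0
  have hev := h_open Z y hyA
    (fun k => ne_top_of_le_ne_top (by simp [hytop]) (hZle k)) (hconv Z hZlt) hZlim
  obtain ⟨k, hk⟩ := eventually_atTop.1 hev
  refine hytop (top_le_iff.1 ?_)
  rw [← not_summable_weights k]
  calc ∑' n, ENNReal.ofReal (1 / (((n + k : ℕ) : ℝ) + 1))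
      = ∑' n, w (n + k) := by
        refine tsum_congr fun n => ?_
        have : y (n + k) = true := hsucc' _ (hk (n + k) (by omega))
        simp [w, this]
    _ ≤ ∑' n, w n := ENNReal.tsum_comp_le_tsum_of_injective (add_left_injective k) w
    _ = weight y := rfl

/-- The embedding `x ↦ ∑ x n / 3 ^ n` of the Cantor set `2 ^ ℕ` into the line. -/
def cantorPt (x : ℕ → Bool) : ℝ := Cardinal.cantorFunction (1 / 3) x

lemma cantorPt_injective : Function.Injective cantorPt :=
  Cardinal.cantorFunction_injective (by norm_num) (by norm_num)

lemma cantorPt_nonneg (x : ℕ → Bool) : 0 ≤ cantorPt x :=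
  tsum_nonneg fun _ => Cardinal.cantorFunctionAux_nonneg (by norm_num)

lemma cantorPt_zero : cantorPt (fun _ => false) = 0 := by
  simp [cantorPt, Cardinal.cantorFunction, Cardinal.cantorFunctionAux]

lemma cantorPt_le (x : ℕ → Bool) : cantorPt x ≤ 3 / 2 := by
  have h := Cardinal.cantorFunction_le (c := 1 / 3) (f := x) (g := fun _ => true)
    (by norm_num) (by norm_num) (by simp)
  refine h.trans (le_of_eq ?_)
  simp only [Cardinal.cantorFunction, Cardinal.cantorFunctionAux, cond_true]
  rw [tsum_geometric_of_lt_one (by norm_num) (by norm_num)]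
  norm_num

lemma continuous_cantorPt : Continuous cantorPt := by
  refine continuous_tsum (u := fun n => (1 / 3 : ℝ) ^ n) (fun n => ?_)
    (summable_geometric_of_lt_one (by norm_num) (by norm_num)) fun n x => ?_
  · exact (continuous_of_discreteTopology
      (f := fun b : Bool => cond b ((1 / 3 : ℝ) ^ n) 0)).comp (continuous_apply n)
  · cases h : x n <;> simp [Cardinal.cantorFunctionAux, h]

lemma exists_notMem_range_cantorPt {a b : ℝ} (h : a < b) :
    ∃ t ∈ Ioo a b, t ∉ range cantorPt := by
  by_contra! hc
  have hemb := (continuous_cantorPt.isClosedEmbedding cantorPt_injective).isEmbedding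
  have htd : IsTotallyDisconnected (range cantorPt) :=
    hemb.isTotallyDisconnected_range.2 inferInstance
  have hs := htd (Ioo a b) hc isPreconnected_Ioo
  have h1 : (2 * a + b) / 3 ∈ Ioo a b := ⟨by linarith, by linarith⟩
  have h2 : (a + 2 * b) / 3 ∈ Ioo a b := ⟨by linarith, by linarith⟩
  linarith [hs h1 h2]

/-- The length of the tooth of the comb above the point `s` of the spine. Teeth stand over two
mirror images of the Cantor set, the parameter `x` giving the points `±(2 - cantorPt x)`. -/
def tooth (s : ℝ) : ℝ :=
  Function.extend cantorPt (fun x => rescale (weight x)) 0 (2 - |s|)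

lemma tooth_apply {s : ℝ} {x : ℕ → Bool} (h : cantorPt x = 2 - |s|) :
    tooth s = rescale (weight x) := by
  rw [tooth, ← h, cantorPt_injective.extend_apply]

lemma tooth_eq_zero {s : ℝ} (h : 2 - |s| ∉ range cantorPt) : tooth s = 0 := by
  rw [tooth, Function.extend_apply']
  · rfl
  · exact h

lemma tooth_nonneg (s : ℝ) : 0 ≤ tooth s := by
  by_cases h : 2 - |s| ∈ range cantorPt
  · obtain ⟨x, hx⟩ := h
    rw [tooth_apply hx]; exact rescale_nonneg _
  · rw [tooth_eq_zero h]

lemma tooth_ends {s : ℝ} (h : |s| = 2) : 0 < tooth s := by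
  have h0 : cantorPt (fun _ => false) = 2 - |s| := by rw [h, cantorPt_zero]; norm_num
  rw [tooth_apply h0]
  exact pos_rescale (by simp [weight])

lemma tooth_middle {s : ℝ} (h : |s| < 1 / 2) : tooth s = 0 := by
  refine tooth_eq_zero ?_
  rintro ⟨x, hx⟩
  linarith [cantorPt_le x]

/-- The toothless points of the spine are dense, because the Cantor set contains no interval. -/
lemma exists_tooth_eq_zero {a b : ℝ} (h : a < b) : ∃ s ∈ Ioo a b, tooth s = 0 := by
  rcases lt_or_ge 0 b with hb | hb
  · obtain ⟨t, ht, ht'⟩ := exists_notMem_range_cantorPt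
      (a := 2 - b) (b := 2 - max a 0) (by have := max_lt h hb; linarith)
    have h1 : max a 0 < 2 - t := by linarith [ht.2]
    have h2 := (le_max_right a 0).trans_lt h1
    refine ⟨2 - t, ⟨(le_max_left a 0).trans_lt h1, by linarith [ht.1]⟩, tooth_eq_zero ?_⟩
    rw [abs_of_pos h2]
    simpa using ht'
  · obtain ⟨t, ht, ht'⟩ := exists_notMem_range_cantorPt
      (a := 2 + a) (b := 2 + b) (by linarith)
    have h2 : t - 2 < 0 := by linarith [ht.2]
    refine ⟨t - 2, ⟨by linarith [ht.1], by linarith [ht.2]⟩, tooth_eq_zero ?_⟩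
    rw [abs_of_neg h2]
    simpa using ht'

/-- The comb: the spine `[-2, 2] × {0}` together with the vertical teeth. -/
def comb : Set (ℝ × ℝ) := {p | |p.1| ≤ 2 ∧ 0 ≤ p.2 ∧ p.2 ≤ tooth p.1}

lemma isCompact_comb : IsCompact comb := by
  let Q : Set ((ℕ → Bool) × ℝ) := (univ ×ˢ Icc 0 1) ∩ {q | q.2 ≤ rescale (weight q.1)}
  have hQ : IsCompact Q :=
    (isCompact_univ.prod isCompact_Icc).inter_right isClosed_hypograph_rescale_weight
  have hc : ∀ σ : ℝ, IsCompact
      ((fun q : (ℕ → Bool) × ℝ => (σ * (2 - cantorPt q.1), q.2)) '' Q) := fun σ =>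
    hQ.image ((continuous_const.mul (continuous_const.sub
      (continuous_cantorPt.comp continuous_fst))).prodMk continuous_snd)
  have hS : IsCompact (Icc (-2 : ℝ) 2 ×ˢ ({0} : Set ℝ)) := isCompact_Icc.prod isCompact_singleton
  convert (hS.union (hc 1)).union (hc (-1)) using 1
  ext ⟨s, y⟩
  constructor
  · rintro ⟨h1, h2, h3⟩
    simp only at h1 h2 h3
    by_cases hr : 2 - |s| ∈ range cantorPt
    · obtain ⟨x, hx⟩ := hr
      rw [tooth_apply hx] at h3
      have hq : (x, y) ∈ Q := ⟨⟨mem_univ _, h2, h3.trans (rescale_le_one _)⟩, h3⟩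
      rcases le_total 0 s with hs | hs
      · refine Or.inl (Or.inr ⟨(x, y), hq, ?_⟩)
        simp [hx, abs_of_nonneg hs]
      · refine Or.inr ⟨(x, y), hq, ?_⟩
        simp [hx, abs_of_nonpos hs]
    · rw [tooth_eq_zero hr] at h3
      exact Or.inl (Or.inl ⟨abs_le.1 h1, le_antisymm h3 h2⟩)
  · have key : ∀ σ : ℝ, |σ| = 1 → ∀ q ∈ Q, ((σ * (2 - cantorPt q.1), q.2) : ℝ × ℝ) ∈ comb := by
      rintro σ hσ ⟨x, y⟩ ⟨⟨-, h1, h2⟩, h3⟩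
      have ha : |σ * (2 - cantorPt x)| = 2 - cantorPt x := by
        rw [abs_mul, hσ, one_mul, abs_of_nonneg]
        linarith [cantorPt_le x]
      refine ⟨?_, h1, ?_⟩
      · simp only [ha]; linarith [cantorPt_nonneg x]
      · rw [tooth_apply (x := x) (by simp only [ha]; ring)]
        exact h3
    rintro ((⟨h1, h2⟩ | ⟨q, hq, h⟩) | ⟨q, hq, h⟩)
    · simp only [mem_singleton_iff] at h2
      exact ⟨abs_le.2 h1, h2.ge, h2.le.trans (tooth_nonneg _)⟩
    · rw [← h]; exact key 1 (by simp) q hq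
    · rw [← h]; exact key (-1) (by simp) q hq

/-! ### Subcontinua of the comb -/

/-- `A` contains, with any two of its points, the arc of the comb joining them: a vertical segment
if the points lie on the same tooth, and otherwise a segment of the spine together with the
vertical segments leading down to it. -/
def ArcConvex (A : Set (ℝ × ℝ)) : Prop :=
  (∀ p ∈ A, ∀ q ∈ A, p.1 < q.1 → ∀ s ∈ Icc p.1 q.1, (s, (0 : ℝ)) ∈ A) ∧
  ∀ s y₁ y₂ y : ℝ, (s, y₁) ∈ A → (s, y₂) ∈ A → y₁ ≤ y → y ≤ y₂ → (s, y) ∈ A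

lemma ArcConvex.inter {A B : Set (ℝ × ℝ)} (hA : ArcConvex A) (hB : ArcConvex B) :
    ArcConvex (A ∩ B) :=
  ⟨fun p hp q hq h s hs => ⟨hA.1 p hp.1 q hq.1 h s hs, hB.1 p hp.2 q hq.2 h s hs⟩,
    fun s y₁ y₂ y h₁ h₂ h h' =>
      ⟨hA.2 s y₁ y₂ y h₁.1 h₂.1 h h', hB.2 s y₁ y₂ y h₁.2 h₂.2 h h'⟩⟩

lemma arcConvex_comb : ArcConvex comb := by
  constructor
  · rintro p ⟨hp, -, -⟩ q ⟨hq, -, -⟩ - s hs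
    rw [abs_le] at hp hq
    exact ⟨abs_le.2 ⟨by linarith [hs.1], by linarith [hs.2]⟩, le_rfl, tooth_nonneg s⟩
  · rintro s y₁ y₂ y ⟨h1, h2, -⟩ ⟨-, -, h3⟩ h h'
    exact ⟨h1, h2.trans h, h'.trans h3⟩

/-- The vertical lines through toothless points separate the comb, and they are dense. -/
lemma arcConvex_of_isPreconnected {A : Set (ℝ × ℝ)} (hA : A ⊆ comb) (hc : IsClosed A)
    (hp : IsPreconnected A) : ArcConvex A := by
  constructor
  · intro p hpA q hqA hpq s hs
    have hzero : ∀ t ∈ Ioo p.1 q.1, tooth t = 0 → (t, (0 : ℝ)) ∈ A := by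
      intro t ht ht0
      have hoc := (hp.image Prod.fst continuous_fst.continuousOn).ordConnected
      obtain ⟨r, hr, hrt⟩ := hoc.out ⟨p, hpA, rfl⟩ ⟨q, hqA, rfl⟩ ⟨ht.1.le, ht.2.le⟩
      have h := hA hr
      have h2 := h.2.2
      rw [hrt, ht0] at h2
      have : r = (t, 0) := Prod.ext hrt (le_antisymm h2 h.2.1)
      rwa [← this]
    by_contra hsA
    have hcl : IsClosed {t : ℝ | (t, (0 : ℝ)) ∈ A} :=
      hc.preimage (continuous_id.prodMk continuous_const)
    obtain ⟨ε, hε, hball⟩ := Metric.isOpen_iff.1 hcl.isOpen_compl s hsA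
    obtain ⟨t, ht, ht0⟩ := exists_tooth_eq_zero
      (a := max (s - ε) p.1) (b := min (s + ε) q.1)
      (max_lt (lt_min (by linarith) (by linarith [hs.2])) (lt_min (by linarith [hs.1]) hpq))
    rw [mem_Ioo, max_lt_iff, lt_min_iff] at ht
    have hmem : t ∈ Metric.ball s ε := by
      rw [Metric.mem_ball, Real.dist_eq, abs_lt]
      constructor <;> linarith [ht.1.1, ht.2.1]
    exact hball hmem (hzero t ⟨ht.1.2, ht.2.2⟩ ht0)
  · intro s y₁ y₂ y h₁ h₂ hy₁ hy₂
    by_contra hy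
    have hy₁' : y₁ < y := lt_of_le_of_ne hy₁ (by rintro rfl; exact hy h₁)
    have hy₂' : y < y₂ := lt_of_le_of_ne hy₂ (by rintro rfl; exact hy h₂)
    have hy₁0 : 0 ≤ y₁ := (hA h₁).2.1
    obtain ⟨ε, hε, hball⟩ := Metric.isOpen_iff.1 hc.isOpen_compl (s, y) hy
    obtain ⟨a, ha, ha0⟩ := exists_tooth_eq_zero (a := s - ε) (b := s) (by linarith)
    obtain ⟨b, hb, hb0⟩ := exists_tooth_eq_zero (a := s) (b := s + ε) (by linarith)
    -- the part of `A` in this box above the height `y` is relatively clopen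
    let U : Set (ℝ × ℝ) := Ioo a b ×ˢ Ioi y
    let V : Set (ℝ × ℝ) := (Icc a b ×ˢ Ici y)ᶜ
    have hU : IsOpen U := isOpen_Ioo.prod isOpen_Ioi
    have hV : IsOpen V := (isClosed_Icc.prod isClosed_Ici).isOpen_compl
    have hUV : A ⊆ U ∪ V := by
      intro r hr
      by_cases hrV : r ∈ Icc a b ×ˢ Ici y
      · left
        obtain ⟨⟨hra, hrb⟩, hry⟩ := hrV
        have hry' : y ≤ r.2 := hry
        have hrt := (hA hr).2.2
        refine ⟨⟨lt_of_le_of_ne hra ?_, lt_of_le_of_ne hrb ?_⟩, lt_of_le_of_ne hry' ?_⟩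
        · intro h
          rw [← h, ha0] at hrt
          linarith
        · intro h
          rw [h, hb0] at hrt
          linarith
        · intro h
          have hmem : r ∈ Metric.ball (s, y) ε := by
            rw [Metric.mem_ball, Prod.dist_eq, max_lt_iff, Real.dist_eq, Real.dist_eq, ← h, abs_lt]
            simp only [sub_self, abs_zero]
            exact ⟨⟨by linarith [ha.1], by linarith [hb.2]⟩, hε⟩
          exact hball hmem hr
      · exact Or.inr hrV
    obtain ⟨r, -, ⟨hr1, hr2⟩, hrV⟩ := hp U V hU hV hUV
      ⟨(s, y₂), h₂, ⟨⟨ha.2, hb.1⟩, hy₂'⟩⟩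
      ⟨(s, y₁), h₁, fun h => absurd h.2 (not_le.2 hy₁')⟩
    exact hrV ⟨⟨hr1.1.le, hr1.2.le⟩, mem_Ici.2 (le_of_lt (mem_Ioi.1 hr2))⟩

/-- There is an injective path in `A` from `p` to `q`. -/
def HasPath (A : Set (ℝ × ℝ)) (p q : ℝ × ℝ) : Prop :=
  ∃ f : ℝ → ℝ × ℝ, Continuous f ∧ InjOn f (Icc 0 1) ∧ f 0 = p ∧ f 1 = q ∧
    ∀ t ∈ Icc (0 : ℝ) 1, f t ∈ A

lemma HasPath.symm {A : Set (ℝ × ℝ)} {p q : ℝ × ℝ} (h : HasPath A p q) : HasPath A q p := by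
  obtain ⟨f, hf, hi, h0, h1, hA⟩ := h
  refine ⟨fun t => f (1 - t), by fun_prop, ?_, by simpa using h1, by simpa using h0, ?_⟩
  · intro t ht u hu htu
    have := hi (x₁ := 1 - t) (x₂ := 1 - u) ⟨by linarith [ht.2], by linarith [ht.1]⟩
      ⟨by linarith [hu.2], by linarith [hu.1]⟩ htu
    linarith
  · exact fun t ht => hA _ ⟨by linarith [ht.2], by linarith [ht.1]⟩

lemma hasPath_segment {p q : ℝ × ℝ} (h : q ≠ p) :
    HasPath ((fun t : ℝ => p + t • (q - p)) '' Icc 0 1) p q := by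
  refine ⟨fun t : ℝ => p + t • (q - p), by fun_prop, ?_, by simp, by simp,
    fun t ht => ⟨t, ht, rfl⟩⟩
  intro t _ u _ htu
  exact smul_left_injective ℝ (sub_ne_zero.2 h) (add_left_cancel htu)

lemma HasPath.mono {A B : Set (ℝ × ℝ)} {p q : ℝ × ℝ} (h : HasPath A p q) (hAB : A ⊆ B) :
    HasPath B p q := by
  obtain ⟨f, hf, hi, h0, h1, hA⟩ := h
  exact ⟨f, hf, hi, h0, h1, fun t ht => hAB (hA t ht)⟩

/-- Down a tooth, along the spine, and up another tooth. -/
lemma hasPath_of_lt {A : Set (ℝ × ℝ)} (hA : ArcConvex A) (hnn : ∀ p ∈ A, 0 ≤ p.2)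
    {p q : ℝ × ℝ} (hp : p ∈ A) (hq : q ∈ A) (h : p.1 < q.1) : HasPath A p q := by
  obtain ⟨a, u⟩ := p
  obtain ⟨b, v⟩ := q
  have hu : 0 ≤ u := hnn _ hp
  have hv : 0 ≤ v := hnn _ hq
  have hab : a < b := h
  have hpq := hA.1 _ hp _ hq h
  have ha : (a, (0 : ℝ)) ∈ A := hpq a ⟨le_rfl, hab.le⟩
  have hb : (b, (0 : ℝ)) ∈ A := hpq b ⟨hab.le, le_rfl⟩
  set l := u + (b - a) + v with hl
  have hl0 : 0 < l := by linarith
  let g : ℝ → ℝ × ℝ := fun τ =>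
    (a + max 0 (min (τ - u) (b - a)), max (u - τ) 0 + max (τ - (u + (b - a))) 0)
  have hg1 : ∀ τ, τ ≤ u → g τ = (a, u - τ) := by
    intro τ hτ
    simp only [g]
    rw [max_eq_left ((min_le_left _ _).trans (by linarith)), max_eq_left (by linarith),
      max_eq_right (by linarith)]
    simp
  have hg2 : ∀ τ, u ≤ τ → τ ≤ u + (b - a) → g τ = (a + (τ - u), 0) := by
    intro τ hτ hτ'
    simp only [g]
    rw [min_eq_left (by linarith), max_eq_right (by linarith), max_eq_right (by linarith),
      max_eq_right (by linarith)]
    simp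
  have hg3 : ∀ τ, u + (b - a) ≤ τ → g τ = (b, τ - (u + (b - a))) := by
    intro τ hτ
    simp only [g]
    rw [min_eq_right (by linarith), max_eq_right (by linarith), max_eq_right (by linarith),
      max_eq_left (by linarith)]
    simp
  have hginj : ∀ τ σ, τ < σ → g τ ≠ g σ := by
    intro τ σ hτσ hgg
    rcases le_total τ u with h1 | h1
    · rw [hg1 τ h1] at hgg
      rcases le_total σ u with h2 | h2
      · rw [hg1 σ h2, Prod.mk.injEq] at hgg
        linarith [hgg.2]
      · rcases le_total σ (u + (b - a)) with h3 | h3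
        · rw [hg2 σ h2 h3, Prod.mk.injEq] at hgg
          linarith [hgg.2, hgg.1]
        · rw [hg3 σ h3, Prod.mk.injEq] at hgg
          linarith [hgg.1]
    · rcases le_total τ (u + (b - a)) with h2 | h2
      · rw [hg2 τ h1 h2] at hgg
        rcases le_total σ (u + (b - a)) with h3 | h3
        · rw [hg2 σ (by linarith) h3, Prod.mk.injEq] at hgg
          linarith [hgg.1]
        · rw [hg3 σ h3, Prod.mk.injEq] at hgg
          linarith [hgg.1, hgg.2]
      · rw [hg3 τ h2, hg3 σ (by linarith), Prod.mk.injEq] at hgg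
        linarith [hgg.2]
  have hgA : ∀ τ, 0 ≤ τ → τ ≤ l → g τ ∈ A := by
    intro τ h0 h1
    rcases le_total τ u with h2 | h2
    · rw [hg1 τ h2]
      exact hA.2 a 0 u _ ha hp (by linarith) (by linarith)
    · rcases le_total τ (u + (b - a)) with h3 | h3
      · rw [hg2 τ h2 h3]
        exact hpq _ ⟨by simp only; linarith, by simp only; linarith⟩
      · rw [hg3 τ h3]
        exact hA.2 b 0 v _ hb hq (by linarith) (by linarith)
  refine ⟨fun t => g (l * t), by fun_prop, ?_, ?_, ?_, ?_⟩
  · intro t _ t' _ htt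
    rcases lt_trichotomy (l * t) (l * t') with h' | h' | h'
    · exact absurd htt (hginj _ _ h')
    · exact mul_left_cancel₀ hl0.ne' h'
    · exact absurd htt.symm (hginj _ _ h')
  · simp only [mul_zero]
    rw [hg1 0 hu, sub_zero]
  · simp only [mul_one]
    rw [hg3 l (by linarith)]
    simp [hl]
  · intro t ht
    exact hgA _ (mul_nonneg hl0.le ht.1) (mul_le_of_le_one_right hl0.le ht.2)

lemma hasPath_of_arcConvex {A : Set (ℝ × ℝ)} (hA : ArcConvex A) (hnn : ∀ p ∈ A, 0 ≤ p.2)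
    {p q : ℝ × ℝ} (hp : p ∈ A) (hq : q ∈ A) (h : p ≠ q) : HasPath A p q := by
  rcases lt_trichotomy p.1 q.1 with h' | h' | h'
  · exact hasPath_of_lt hA hnn hp hq h'
  · refine (hasPath_segment h.symm).mono ?_
    rintro _ ⟨t, ht, rfl⟩
    obtain ⟨a, u⟩ := p
    obtain ⟨b, v⟩ := q
    obtain rfl : a = b := h'
    have he : ((a, u) : ℝ × ℝ) + t • ((a, v) - (a, u)) = (a, u + t * (v - u)) := by
      simp
    simp only [he]
    rcases le_total u v with huv | huv
    · exact hA.2 a u v _ hp hq (by nlinarith [ht.1, ht.2]) (by nlinarith [ht.1, ht.2])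
    · exact hA.2 a v u _ hq hp (by nlinarith [ht.1, ht.2]) (by nlinarith [ht.1, ht.2])
  · exact (hasPath_of_lt hA hnn hq hp h').symm

lemma ArcConvex.isPreconnected {A : Set (ℝ × ℝ)} (hA : ArcConvex A)
    (hnn : ∀ p ∈ A, 0 ≤ p.2) : IsPreconnected A := by
  refine isPreconnected_of_forall_pair fun p hp q hq => ?_
  by_cases h : p = q
  · subst h
    exact ⟨{p}, by simpa using hp, rfl, rfl, isPreconnected_singleton⟩
  · obtain ⟨f, hf, -, h0, h1, hfA⟩ := hasPath_of_arcConvex hA hnn hp hq h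
    refine ⟨f '' Icc 0 1, ?_, ⟨0, by simp, h0⟩, ⟨1, by simp, h1⟩,
      isPreconnected_Icc.image f hf.continuousOn⟩
    rintro _ ⟨t, ht, rfl⟩
    exact hfA t ht

lemma HasPath.exists_isArc {P A : Set (ℝ × ℝ)} (hAP : A ⊆ P) {z w : P}
    (h : HasPath A z w) : ∃ B : Set P, IsArc B z w ∧ ∀ x ∈ B, (x : ℝ × ℝ) ∈ A := by
  obtain ⟨f, hf, hi, h0, h1, hA⟩ := h
  let F : Icc (0 : ℝ) 1 → P := fun t => ⟨f t, hAP (hA t t.2)⟩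
  have hF : Continuous F := (hf.comp continuous_subtype_val).subtype_mk _
  have hFi : Function.Injective F := fun t u htu =>
    Subtype.ext (hi t.2 u.2 (congrArg Subtype.val htu))
  have hemb := (hF.isClosedEmbedding hFi).isEmbedding
  refine ⟨range F, ⟨hemb.toHomeomorph, Subtype.ext h0, Subtype.ext h1⟩, ?_⟩
  rintro _ ⟨t, rfl⟩
  exact hA t t.2

lemma IsArc.properties {B : Set comb} {z w : comb} (h : IsArc B z w) :
    ArcConvex (Subtype.val '' B) ∧ z ∈ B ∧ w ∈ B ∧ w ≠ z := by
  obtain ⟨e, h0, h1⟩ := h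
  have hB : B = range fun t => (e t : comb) := by
    ext x
    constructor
    · intro hx
      exact ⟨e.symm ⟨x, hx⟩, by simp⟩
    · rintro ⟨t, rfl⟩
      exact (e t).2
  have hc : Continuous fun t => (e t : comb) := continuous_subtype_val.comp e.continuous
  have : PreconnectedSpace (Icc (0 : ℝ) 1) :=
    isPreconnected_iff_preconnectedSpace.1 isPreconnected_Icc
  refine ⟨?_, h0 ▸ (e _).2, h1 ▸ (e _).2, ?_⟩
  · refine arcConvex_of_isPreconnected ?_ ?_ ?_
    · rintro _ ⟨x, -, rfl⟩
      exact x.2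
    · rw [hB]
      exact ((isCompact_range hc).image continuous_subtype_val).isClosed
    · rw [hB]
      exact (isPreconnected_range hc).image _ continuous_subtype_val.continuousOn
  · rw [← h0, ← h1]
    intro h
    have := e.injective (Subtype.ext h)
    simp at this

/-! ### The endpoints of the comb -/

/-- An arc starting at the tip of a tooth descends along this tooth. -/
lemma exists_descent {A : Set (ℝ × ℝ)} (hA : ArcConvex A) (hAc : A ⊆ comb) {p q : ℝ × ℝ}
    (hp : p ∈ A) (hpt : p.2 = tooth p.1) (hpos : 0 < p.2) (hq : q ∈ A) (hqp : q ≠ p) :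
    ∃ y₀ < p.2, ∀ y ∈ Icc y₀ p.2, (p.1, y) ∈ A := by
  rcases lt_trichotomy p.1 q.1 with h | h | h
  · exact ⟨0, hpos, fun y hy => hA.2 _ 0 p.2 y (hA.1 p hp q hq h _ ⟨le_rfl, h.le⟩) hp hy.1 hy.2⟩
  · have hq2 : q.2 ≤ p.2 := by rw [hpt, h]; exact (hAc hq).2.2
    refine ⟨q.2, lt_of_le_of_ne hq2 fun h' => hqp (Prod.ext h.symm h'), fun y hy => ?_⟩
    exact hA.2 _ q.2 p.2 y (by rw [h]; exact hq) hp hy.1 hy.2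
  · exact ⟨0, hpos, fun y hy => hA.2 _ 0 p.2 y (hA.1 q hq p hp h _ ⟨h.le, le_rfl⟩) hp hy.1 hy.2⟩

lemma orderAtLeast_two (z : comb) (w₁ w₂ : ℝ × ℝ) (h₁ : w₁ ≠ z) (h₂ : w₂ ≠ z)
    (hs₁ : ∀ t ∈ Icc (0 : ℝ) 1, (z : ℝ × ℝ) + t • (w₁ - z) ∈ comb)
    (hs₂ : ∀ t ∈ Icc (0 : ℝ) 1, (z : ℝ × ℝ) + t • (w₂ - z) ∈ comb)
    (hd : ∀ t ∈ Icc (0 : ℝ) 1, ∀ u ∈ Icc (0 : ℝ) 1, t • (w₁ - z) = u • (w₂ - z) →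
      t • (w₁ - z) = 0) :
    OrderAtLeast (univ : Set comb) z 2 := by
  have hm₁ : w₁ ∈ comb := by simpa using hs₁ 1 (by simp)
  have hm₂ : w₂ ∈ comb := by simpa using hs₂ 1 (by simp)
  obtain ⟨B₁, hB₁, hB₁'⟩ := HasPath.exists_isArc (P := comb) (z := z) (w := ⟨w₁, hm₁⟩)
    (by rintro _ ⟨t, ht, rfl⟩; exact hs₁ t ht) (hasPath_segment h₁)
  obtain ⟨B₂, hB₂, hB₂'⟩ := HasPath.exists_isArc (P := comb) (z := z) (w := ⟨w₂, hm₂⟩)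
    (by rintro _ ⟨t, ht, rfl⟩; exact hs₂ t ht) (hasPath_segment h₂)
  have hint : B₁ ∩ B₂ = {z} := by
    refine Subset.antisymm ?_ ?_
    · rintro x ⟨hx₁, hx₂⟩
      obtain ⟨t, ht, hxt⟩ := hB₁' x hx₁
      obtain ⟨u, hu, hxu⟩ := hB₂' x hx₂
      simp only at hxt hxu
      have h := hd t ht u hu (add_left_cancel (hxt.trans hxu.symm))
      rw [h, add_zero] at hxt
      exact Subtype.ext hxt.symm
    · rintro _ rfl
      exact ⟨hB₁.properties.2.1, hB₂.properties.2.1⟩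
  refine ⟨![B₁, B₂], fun _ => subset_univ _, ?_, ?_⟩
  · intro i
    fin_cases i
    · exact ⟨_, hB₁⟩
    · exact ⟨_, hB₂⟩
  · intro i j hij
    fin_cases i <;> fin_cases j
    · exact absurd rfl hij
    · exact hint
    · simpa [inter_comm] using hint
    · exact absurd rfl hij

/-- An interior point of the spine is not an endpoint. -/
lemma orderAtLeast_two_spine (z : comb) (h2 : (z : ℝ × ℝ).2 = 0) (h1 : |(z : ℝ × ℝ).1| < 2) :
    OrderAtLeast (univ : Set comb) z 2 := by
  obtain ⟨⟨s, y⟩, hz⟩ := z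
  simp only at h1 h2
  subst h2
  rw [abs_lt] at h1
  refine orderAtLeast_two _ (2, 0) (-2, 0) ?_ ?_ ?_ ?_ ?_
  · intro h
    linarith [congrArg Prod.fst h]
  · intro h
    linarith [congrArg Prod.fst h]
  · intro t ht
    refine ⟨abs_le.2 ?_, by simp, by simpa using tooth_nonneg _⟩
    simp only [Prod.fst_add, Prod.smul_fst, Prod.fst_sub, smul_eq_mul]
    constructor <;> nlinarith [ht.1, ht.2]
  · intro t ht
    refine ⟨abs_le.2 ?_, by simp, by simpa using tooth_nonneg _⟩
    simp only [Prod.fst_add, Prod.smul_fst, Prod.fst_sub, smul_eq_mul]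
    constructor <;> nlinarith [ht.1, ht.2]
  · intro t ht u hu h
    have h' : t * (2 - s) = u * (-2 - s) := by simpa using congrArg Prod.fst h
    have h3 : t * (2 - s) = 0 := by nlinarith [ht.1, hu.1]
    ext
    · simpa using h3
    · simp

/-- The endpoints of the comb are the tips of its nondegenerate teeth. -/
lemma mem_endpoints_comb (z : comb) : z ∈ Endpoints (univ : Set comb) ↔
    0 < (z : ℝ × ℝ).2 ∧ (z : ℝ × ℝ).2 = tooth (z : ℝ × ℝ).1 := by
  constructor
  · rintro ⟨-, -, hz2⟩
    by_contra hcon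
    apply hz2
    have hz := z.2
    rcases eq_or_lt_of_le hz.2.1 with h0 | h0
    · rcases lt_or_eq_of_le hz.1 with h1 | h1
      · exact orderAtLeast_two_spine z h0.symm h1
      · have ht := tooth_ends h1
        obtain ⟨⟨s, y⟩, hzc⟩ := z
        simp only at h0 h1 ht
        subst h0
        have hs : s ≠ 0 := by rintro rfl; simp at h1
        refine orderAtLeast_two _ (s, tooth s) (0, 0) ?_ ?_ ?_ ?_ ?_
        · intro h
          linarith [congrArg Prod.snd h]
        · intro h
          exact hs (congrArg Prod.fst h).symm
        · intro t ht'
          refine ⟨by simp [h1], ?_, ?_⟩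
          · simpa using mul_nonneg ht'.1 ht.le
          · simpa using mul_le_of_le_one_left ht.le ht'.2
        · intro t ht'
          refine ⟨?_, by simp, by simpa using tooth_nonneg _⟩
          have : s + t * (0 - s) = (1 - t) * s := by ring
          simp only [Prod.fst_add, Prod.smul_fst, Prod.fst_sub, smul_eq_mul, this]
          rw [abs_mul, h1, abs_of_nonneg (by linarith [ht'.2])]
          linarith [ht'.1]
        · intro t _ u _ h
          ext
          · simp
          · have := congrArg Prod.snd h
            simpa using this
    · obtain ⟨⟨s, y⟩, hzc⟩ := z
      simp only at h0 hcon hz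
      have hlt : y < tooth s := lt_of_le_of_ne hz.2.2 fun h => hcon ⟨h0, h⟩
      refine orderAtLeast_two _ (s, tooth s) (s, 0) ?_ ?_ ?_ ?_ ?_
      · intro h
        linarith [congrArg Prod.snd h]
      · intro h
        linarith [congrArg Prod.snd h]
      · intro t ht
        refine ⟨by simpa using hz.1, ?_, ?_⟩
        · simp only [Prod.snd_add, Prod.smul_snd, Prod.snd_sub, smul_eq_mul]
          nlinarith [ht.1, ht.2]
        · simp only [Prod.snd_add, Prod.smul_snd, Prod.snd_sub, smul_eq_mul, Prod.fst_add,
            Prod.smul_fst, Prod.fst_sub, sub_self, mul_zero, add_zero]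
          nlinarith [ht.1, ht.2]
      · intro t ht
        refine ⟨by simpa using hz.1, ?_, ?_⟩
        · simp only [Prod.snd_add, Prod.smul_snd, Prod.snd_sub, smul_eq_mul]
          nlinarith [ht.1, ht.2]
        · simp only [Prod.snd_add, Prod.smul_snd, Prod.snd_sub, smul_eq_mul, Prod.fst_add,
            Prod.smul_fst, Prod.fst_sub, sub_self, mul_zero, add_zero]
          nlinarith [ht.1, ht.2]
      · intro t ht u hu h
        have h' : t * (tooth s - y) = u * (0 - y) := by simpa using congrArg Prod.snd h
        have h3 : t * (tooth s - y) = 0 := by nlinarith [ht.1, hu.1]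
        ext
        · simp
        · simpa using h3
  · rintro ⟨hpos, htip⟩
    refine ⟨mem_univ _, ?_, ?_⟩
    · have hfoot : ((z : ℝ × ℝ).1, (0 : ℝ)) ∈ comb := ⟨z.2.1, le_rfl, tooth_nonneg _⟩
      obtain ⟨B, hB, -⟩ := HasPath.exists_isArc (P := comb) (A := comb) Subset.rfl
        (z := z) (w := ⟨_, hfoot⟩)
        (hasPath_of_arcConvex arcConvex_comb (fun p hp => hp.2.1) z.2 hfoot
          (fun h => hpos.ne' (congrArg Prod.snd h)))
      exact ⟨fun _ => B, fun _ => subset_univ _, fun _ => ⟨_, hB⟩,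
        fun i j hij => absurd (Subsingleton.elim i j) hij⟩
    · rintro ⟨A, -, hA, hint⟩
      have key : ∀ i, ∃ y₀ < (z : ℝ × ℝ).2, ∀ y ∈ Icc y₀ (z : ℝ × ℝ).2,
          ((z : ℝ × ℝ).1, y) ∈ Subtype.val '' A i := by
        intro i
        obtain ⟨b, hb⟩ := hA i
        obtain ⟨hconv, hz, hbm, hbz⟩ := hb.properties
        refine exists_descent hconv ?_ ⟨z, hz, rfl⟩ htip hpos ⟨b, hbm, rfl⟩
          (fun h => hbz (Subtype.ext h))
        rintro _ ⟨x, -, rfl⟩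
        exact x.2
      obtain ⟨a, ha, ha'⟩ := key 0
      obtain ⟨b, hb, hb'⟩ := key 1
      obtain ⟨x, hx, hxe⟩ := ha' (max a b) ⟨le_max_left _ _, (max_lt ha hb).le⟩
      obtain ⟨x', hx', hxe'⟩ := hb' (max a b) ⟨le_max_right _ _, (max_lt ha hb).le⟩
      have hxx : x = x' := Subtype.ext (hxe.trans hxe'.symm)
      subst hxx
      have hxz : x ∈ ({z} : Set comb) := hint 0 1 (by decide) ▸ ⟨hx, hx'⟩
      rw [mem_singleton_iff] at hxz
      rw [hxz] at hxe
      have := congrArg Prod.snd hxe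
      simp only at this
      exact (max_lt ha hb).ne this.symm

lemma not_dense_endpoints : ¬ Dense (Endpoints (univ : Set comb)) := by
  intro hd
  let U : Set comb := {z | |(z : ℝ × ℝ).1| < 1 / 2}
  have hU : IsOpen U := isOpen_lt (by fun_prop) continuous_const
  have h0 : ((0, 0) : ℝ × ℝ) ∈ comb := ⟨by simp, le_rfl, tooth_nonneg _⟩
  obtain ⟨z, hzU, hz⟩ := hd.inter_open_nonempty U hU ⟨⟨(0, 0), h0⟩, by simp [U]⟩
  obtain ⟨h1, h2⟩ := (mem_endpoints_comb z).1 hz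
  rw [tooth_middle hzU] at h2
  exact h1.ne' h2

/-- A clopen neighbourhood of the tip coded by `x`, inside the set of tips so high that their
weight is at most `weight x + 1`, would contradict `no_bounded_clopen`. -/
lemma not_zeroDimPointAt (z : Endpoints (univ : Set comb)) : ¬ ZeroDimPointAt z := by
  intro hzd
  obtain ⟨hpos, htip⟩ := (mem_endpoints_comb z.1).1 z.2
  obtain ⟨σ, hσ, hσs⟩ : ∃ σ : ℝ, |σ| = 1 ∧
      (z : ℝ × ℝ).1 = σ * |(z : ℝ × ℝ).1| := by
    rcases le_total 0 (z : ℝ × ℝ).1 with h | h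
    · exact ⟨1, by simp, by simp [abs_of_nonneg h]⟩
    · exact ⟨-1, by simp, by simp [abs_of_nonpos h]⟩
  obtain ⟨x, hx⟩ : 2 - |(z : ℝ × ℝ).1| ∈ range cantorPt := by
    by_contra h
    rw [htip, tooth_eq_zero h] at hpos
    exact hpos.ne rfl
  have hzx := htip.trans (tooth_apply hx)
  have hwx : weight x ≠ ⊤ := rescale_pos (hzx ▸ hpos)
  let g : (ℕ → Bool) → ℝ := fun u => σ * (2 - cantorPt u)
  have hg : Continuous g := continuous_const.mul (continuous_const.sub continuous_cantorPt)
  have habs : ∀ u, |g u| = 2 - cantorPt u := by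
    intro u
    simp only [g]
    rw [abs_mul, hσ, one_mul, abs_of_nonneg]
    linarith [cantorPt_le u]
  have htooth : ∀ u, tooth (g u) = rescale (weight u) := fun u =>
    tooth_apply (by rw [habs]; ring)
  have hcomb : ∀ u, ((g u, rescale (weight u)) : ℝ × ℝ) ∈ comb := fun u =>
    ⟨by simp only [habs]; linarith [cantorPt_nonneg u], rescale_nonneg _, (htooth u).ge⟩
  have hend : ∀ u, weight u ≠ ⊤ → (⟨_, hcomb u⟩ : comb) ∈ Endpoints (univ : Set comb) :=
    fun u hu => (mem_endpoints_comb _).2 ⟨pos_rescale hu, (htooth u).symm⟩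
  have hlim : ∀ (u : ℕ → ℕ → Bool) (y : ℕ → Bool) (hu : ∀ k, weight (u k) ≠ ⊤)
      (hy : weight y ≠ ⊤), Tendsto u atTop (𝓝 y) →
      Tendsto (fun k => weight (u k)) atTop (𝓝 (weight y)) →
      Tendsto (fun k => (⟨_, hend (u k) (hu k)⟩ : Endpoints (univ : Set comb))) atTop
        (𝓝 ⟨_, hend y hy⟩) := by
    intro u y hu hy h1 h2
    rw [tendsto_subtype_rng, tendsto_subtype_rng]
    exact ((hg.tendsto y).comp h1).prodMk_nhds ((continuous_rescale.tendsto _).comp h2)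
  have hU : {w : Endpoints (univ : Set comb) | rescale (weight x + 1) < (w : ℝ × ℝ).2} ∈ 𝓝 z := by
    refine (isOpen_lt continuous_const (by fun_prop)).mem_nhds ?_
    change rescale (weight x + 1) < (z : ℝ × ℝ).2
    rw [hzx]
    exact rescale_lt hwx
  obtain ⟨V, hV, hzV, hVU⟩ := hzd _ hU
  have hempty := no_bounded_clopen
    {u | ∃ hu : weight u ≠ ⊤, (⟨_, hend u hu⟩ : Endpoints (univ : Set comb)) ∈ V}
    (weight x + 1) (by simp [hwx]) ?_ ?_ ?_
  · have hzz : z = ⟨_, hend x hwx⟩ := by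
      refine Subtype.ext (Subtype.ext (Prod.ext ?_ hzx))
      simp only [g, hx]
      rw [hσs]
      simp [abs_mul, hσ]
    have : x ∈ (∅ : Set (ℕ → Bool)) := by
      rw [← hempty]
      exact ⟨hwx, hzz ▸ hzV⟩
    exact this
  · rintro u ⟨hu, huV⟩
    by_contra! hlt
    exact absurd (hVU huV) (not_lt.2 (rescale_antitone hlt.le))
  · intro u y hy hu h1 h2
    choose hu1 hu2 using hu
    exact ⟨hy, hV.1.mem_of_tendsto (hlim u y hu1 hy h1 h2) (Eventually.of_forall hu2)⟩
  · rintro u y ⟨hy, hyV⟩ hu h1 h2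
    filter_upwards [(hlim u y hu hy h1 h2).eventually (hV.2.mem_nhds hyV)] with k hk
    exact ⟨hu k, hk⟩

/-! ### The counterexample -/

/-- There is a dendroid (a non-degenerate arcwise connected, hereditarily
unicoherent metrizable continuum) whose endpoint set is not dense but has no point of
zero-dimensionality.  Thus the analog for dendroids of "if the endpoint set is not dense
then it has a point of zero-dimensionality" fails. -/
theorem exists_dendroid_counterexample :
    ∃ (D : Type) (_ : TopologicalSpace D),
      CompactSpace D ∧ ConnectedSpace D ∧ TopologicalSpace.MetrizableSpace D ∧
      Nontrivial D ∧
      (∀ a b : D, a ≠ b → ∃ A : Set D, IsArc A a b) ∧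
      (∀ A B : Set D, IsCompact A → IsConnected A → IsCompact B → IsConnected B →
        IsConnected (A ∪ B) → IsConnected (A ∩ B)) ∧
      ¬ Dense (Endpoints (Set.univ : Set D)) ∧
      (∀ z : ↥(Endpoints (Set.univ : Set D)), ¬ ZeroDimPointAt z) := by
  have hspine : ∀ s : ℝ, |s| ≤ 2 → ((s, 0) : ℝ × ℝ) ∈ comb := fun s hs =>
    ⟨hs, le_rfl, tooth_nonneg s⟩
  have h0 := hspine 0 (by simp)
  have h1 := hspine 1 (by norm_num)
  refine ⟨comb, inferInstance, isCompact_iff_compactSpace.1 isCompact_comb,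
    isConnected_iff_connectedSpace.1 ⟨⟨_, h0⟩, arcConvex_comb.isPreconnected fun p hp => hp.2.1⟩,
    inferInstance, ⟨⟨⟨_, h0⟩, ⟨_, h1⟩, ?_⟩⟩, ?_, ?_, not_dense_endpoints, not_zeroDimPointAt⟩
  · intro h
    have := congrArg (fun z : comb => (z : ℝ × ℝ).1) h
    norm_num at this
  · intro a b hab
    obtain ⟨B, hB, -⟩ := HasPath.exists_isArc (P := comb) (A := comb) Subset.rfl
      (hasPath_of_arcConvex arcConvex_comb (fun p hp => hp.2.1) a.2 b.2
        (fun h => hab (Subtype.ext h)))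
    exact ⟨B, hB⟩
  · intro A B hA hA' hB hB' hAB
    have hconv : ∀ C : Set comb, IsCompact C → IsConnected C → ArcConvex (Subtype.val '' C) := by
      intro C hC hC'
      refine arcConvex_of_isPreconnected ?_ (hC.image continuous_subtype_val).isClosed
        (hC'.isPreconnected.image _ continuous_subtype_val.continuousOn)
      rintro _ ⟨x, -, rfl⟩
      exact x.2
    refine ⟨?_, ?_⟩
    -- two disjoint nonempty closed sets cannot have a connected union
    · obtain ⟨x, -, hx⟩ := isPreconnected_closed_iff.1 hAB.isPreconnected A B hA.isClosed
        hB.isClosed Subset.rfl (hA'.nonempty.mono fun x hx => ⟨Or.inl hx, hx⟩)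
        (hB'.nonempty.mono fun x hx => ⟨Or.inr hx, hx⟩)
      exact ⟨x, hx⟩
    · rw [← IsInducing.subtypeVal.isPreconnected_image, image_inter Subtype.val_injective]
      refine ((hconv A hA hA').inter (hconv B hB hB')).isPreconnected ?_
      rintro _ ⟨⟨x, -, rfl⟩, -⟩
      exact x.2.2.1

end SmoothFanPaper
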